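/- arXiv:0809.0813 — 2 statements merged into one kernel-verified Lean document; each statement's English description precedes it below -/
import Mathlib

section
/- Every finite-dimensional normed space (E, ‖·‖) with dim E = n admits a Euclidean norm ‖·‖₊ (induced by an inner product) such that ‖x‖² ≤ ‖x‖₊² ≤ n·‖x‖² for all x ∈ E. -/
/-!
By compactness some linear isomorphism `T` from a Euclidean space `F` maps the unit ball onto an
ellipsoid of maximal volume in the unit ball of `E`; the Euclidean norm on `E` is `‖T⁻¹ x‖`.
Maximality says `|det A| ≤ ‖T ∘ A‖ ^ n` for all endomorphisms `A` of `F`. Applied to the symmetric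
map `A = 1 + t ⟪v, ·⟫ v`, whose determinant is `1 + t ‖v‖²` and for which duality gives
`‖T ∘ A‖² ≤ 1 + (2t + t² ‖v‖²) ‖T v‖²`, it yields
`(1 + t ‖v‖²)² ≤ (1 + (2t + t² ‖v‖²) ‖T v‖²) ^ n` for `t ≥ 0`. There is equality at `t = 0`,
so comparing derivatives there gives `‖v‖² ≤ n ‖T v‖²`.
-/

open Filter Topology InnerProductSpace
open scoped RealInnerProductSpace

theorem le_of_hasDerivWithinAt_Ioi_of_eventuallyLE {f g : ℝ → ℝ} {f' g' a : ℝ}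
    (hf : HasDerivWithinAt f f' (Set.Ioi a) a) (hg : HasDerivWithinAt g g' (Set.Ioi a) a)
    (ha : f a = g a) (hle : f ≤ᶠ[𝓝[>] a] g) : f' ≤ g' := by
  rw [hasDerivWithinAt_iff_tendsto_slope' Set.self_notMem_Ioi] at hf hg
  refine le_of_tendsto_of_tendsto hf hg ?_
  filter_upwards [self_mem_nhdsWithin, hle] with t (ht : a < t) hfg
  rw [slope_def_field, slope_def_field, ha]
  have : 0 < t - a := sub_pos.2 ht
  gcongr

theorem le_mul_of_forall_sq_le_pow {a b : ℝ} {n : ℕ}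
    (h : ∀ t : ℝ, 0 < t → (1 + t * a) ^ 2 ≤ (1 + (2 * t + t ^ 2 * a) * b) ^ n) :
    a ≤ n * b := by
  have hleft : HasDerivAt (fun t : ℝ ↦ (1 + t * a) ^ 2) (2 * a) 0 := by
    simpa using (((hasDerivAt_id (0 : ℝ)).mul_const a).const_add 1).fun_pow 2
  have hinner : HasDerivAt (fun t : ℝ ↦ 2 * t + t ^ 2 * a) 2 0 := by
    simpa using
      ((hasDerivAt_id (0 : ℝ)).const_mul 2).fun_add ((hasDerivAt_pow 2 (0 : ℝ)).mul_const a)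
  have hright : HasDerivAt (fun t : ℝ ↦ (1 + (2 * t + t ^ 2 * a) * b) ^ n) (n * (2 * b)) 0 := by
    simpa using ((hinner.mul_const b).const_add 1).fun_pow n
  linarith [le_of_hasDerivWithinAt_Ioi_of_eventuallyLE hleft.hasDerivWithinAt
    hright.hasDerivWithinAt (by simp) (eventually_nhdsWithin_of_forall h)]

section JohnEquiv

variable {E F : Type*} [NormedAddCommGroup E] [NormedSpace ℝ E]
  [NormedAddCommGroup F] [NormedSpace ℝ F]

/-- `T` maps the unit ball of `F` onto a body of maximal volume among its linear images contained in
the unit ball of `E`; for Euclidean `F` this body is the John ellipsoid of `E`. Every competitor is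
the image under `T ∘ A` for an endomorphism `A` of `F`, and the ratio of the volumes is `|det A|`,
so no measure on `E` is needed. -/
structure IsJohnEquiv (T : F ≃L[ℝ] E) : Prop where
  norm_le_one : ‖(T : F →L[ℝ] E)‖ ≤ 1
  abs_det_le_one (A : F →L[ℝ] F) : ‖(T : F →L[ℝ] E) ∘L A‖ ≤ 1 → |A.det| ≤ 1

theorem exists_continuousLinearEquiv_norm_le_one (e : F ≃L[ℝ] E) :
    ∃ T : F ≃L[ℝ] E, ‖(T : F →L[ℝ] E)‖ ≤ 1 := by
  let c : ℝ := (‖(e : F →L[ℝ] E)‖ + 1)⁻¹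
  have hc : 0 < c := by positivity
  let T : F ≃L[ℝ] E := e.trans (ContinuousLinearEquiv.smulLeft (Units.mk0 c hc.ne'))
  have hT : (T : F →L[ℝ] E) = c • (e : F →L[ℝ] E) := rfl
  refine ⟨T, ?_⟩
  rw [hT, norm_smul, Real.norm_of_nonneg hc.le, inv_mul_le_one₀ (by positivity)]
  exact le_add_of_nonneg_right zero_le_one

theorem exists_isJohnEquiv [FiniteDimensional ℝ F] (e₀ : F ≃L[ℝ] E) :
    ∃ T : F ≃L[ℝ] E, IsJohnEquiv T := by
  have : FiniteDimensional ℝ E := e₀.toLinearEquiv.finiteDimensional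
  have : ProperSpace (F →L[ℝ] E) := FiniteDimensional.proper ℝ _
  obtain ⟨e, he⟩ := exists_continuousLinearEquiv_norm_le_one e₀
  let vol (S : F →L[ℝ] E) : ℝ := |((e.symm : E →L[ℝ] F) ∘L S).det|
  have hvol : Continuous vol :=
    (ContinuousLinearMap.continuous_det.comp
      (ContinuousLinearMap.compL ℝ F E F (e.symm : E →L[ℝ] F)).continuous).abs
  obtain ⟨S, hS, hmax⟩ := (isCompact_closedBall (0 : F →L[ℝ] E) 1).exists_isMaxOn
    ⟨0, by simp⟩ hvol.continuousOn
  simp only [IsMaxOn, IsMaxFilter, eventually_principal, mem_closedBall_zero_iff] at hS hmax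
  have hvole : vol e = 1 := by simp [vol, ContinuousLinearMap.det]
  have hpos : 0 < vol S := zero_lt_one.trans_le (hvole ▸ hmax e he)
  let T : F ≃L[ℝ] E :=
    (ContinuousLinearMap.toContinuousLinearEquivOfDetNeZero _ (abs_pos.1 hpos)).trans e
  have hTS : (T : F →L[ℝ] E) = S := by ext; simp [T]
  refine ⟨T, hTS ▸ hS, fun A hA ↦ ?_⟩
  have hvolA : vol (S ∘L A) = vol S * |A.det| := by
    rw [← abs_mul]
    exact congrArg abs (LinearMap.det_comp ((e.symm : E →L[ℝ] F) ∘L S : F →ₗ[ℝ] F) A)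
  exact (mul_le_iff_le_one_right hpos).1 (hvolA ▸ hmax _ (hTS ▸ hA))

theorem IsJohnEquiv.abs_det_le_norm_comp_pow {T : F ≃L[ℝ] E} (hT : IsJohnEquiv T)
    (A : F →L[ℝ] F) : |A.det| ≤ ‖(T : F →L[ℝ] E) ∘L A‖ ^ Module.finrank ℝ F := by
  obtain rfl | hA := eq_or_ne A 0
  · simp [ContinuousLinearMap.det]
  set c := ‖(T : F →L[ℝ] E) ∘L A‖
  have hc : 0 < c := by
    refine norm_pos_iff.2 fun h ↦ hA ?_
    ext u
    simpa using DFunLike.congr_fun h u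
  have hscaled : |(c⁻¹ • A).det| ≤ 1 := hT.abs_det_le_one _ <| by
    simp [norm_smul, c, inv_mul_cancel₀ hc.ne']
  simpa [ContinuousLinearMap.det, abs_mul, abs_of_pos hc, inv_mul_le_one₀ (pow_pos hc _)]
    using hscaled

end JohnEquiv

theorem opNorm_le_of_forall_dual_comp_le {𝕜 E F : Type*} [RCLike 𝕜] [SeminormedAddCommGroup E]
    [NormedSpace 𝕜 E] [SeminormedAddCommGroup F] [NormedSpace 𝕜 F] {S : F →L[𝕜] E} {c : ℝ}
    (h : ∀ g : StrongDual 𝕜 E, ‖g‖ ≤ 1 → ‖g ∘L S‖ ≤ c) : ‖S‖ ≤ c := by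
  have hc : 0 ≤ c := (norm_nonneg _).trans (h 0 (by simp))
  refine S.opNorm_le_bound hc fun u ↦ ?_
  obtain ⟨g, hg, hgu⟩ := exists_dual_vector'' 𝕜 (S u)
  calc ‖S u‖ = ‖(g ∘L S) u‖ := by simp [hgu]
    _ ≤ c * ‖u‖ := (g ∘L S).le_of_opNorm_le (h g hg) u

section AxialStretch

variable {E F : Type*} [NormedAddCommGroup E] [NormedSpace ℝ E]
  [NormedAddCommGroup F] [InnerProductSpace ℝ F]

/-- The symmetric operator that fixes the orthogonal complement of `v` and stretches the direction
of `v` by the factor `1 + t * ‖v‖ ^ 2`. -/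
noncomputable def axialStretch (v : F) (t : ℝ) : F →L[ℝ] F :=
  ContinuousLinearMap.id ℝ F + t • rankOne ℝ v v

@[simp]
theorem axialStretch_apply (v : F) (t : ℝ) (u : F) :
    axialStretch v t u = u + (t * ⟪v, u⟫) • v := by
  simp [axialStretch, mul_smul]

theorem inner_axialStretch_left (v : F) (t : ℝ) (u w : F) :
    ⟪axialStretch v t u, w⟫ = ⟪u, axialStretch v t w⟫ := by
  simp only [axialStretch_apply, inner_add_left, inner_add_right, real_inner_smul_left,
    real_inner_smul_right, real_inner_comm u v]
  ring

theorem norm_axialStretch_apply_sq (v : F) (t : ℝ) (u : F) :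
    ‖axialStretch v t u‖ ^ 2 = ‖u‖ ^ 2 + (2 * t + t ^ 2 * ‖v‖ ^ 2) * ⟪u, v⟫ ^ 2 := by
  rw [axialStretch_apply, norm_add_sq_real, real_inner_smul_right, norm_smul, mul_pow,
    Real.norm_eq_abs, sq_abs, real_inner_comm]
  ring

theorem det_axialStretch [FiniteDimensional ℝ F] (v : F) (t : ℝ) :
    (axialStretch v t).det = 1 + t * ‖v‖ ^ 2 := by
  have htransvection :
      (axialStretch v t : F →ₗ[ℝ] F) = LinearMap.transvection (t • innerₗ F v) v := by
    ext u
    simp [LinearMap.transvection.apply]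
  rw [ContinuousLinearMap.det, htransvection, LinearMap.transvection.det]
  simp

theorem norm_dual_comp_axialStretch_sq [CompleteSpace F] (φ : StrongDual ℝ F) (v : F) (t : ℝ) :
    ‖φ ∘L axialStretch v t‖ ^ 2 = ‖φ‖ ^ 2 + (2 * t + t ^ 2 * ‖v‖ ^ 2) * φ v ^ 2 := by
  obtain ⟨z, rfl⟩ := (toDual ℝ F).surjective φ
  have hcomp : toDual ℝ F z ∘L axialStretch v t = toDual ℝ F (axialStretch v t z) := by
    ext u
    exact (inner_axialStretch_left v t z u).symm
  rw [hcomp, LinearIsometryEquiv.norm_map, LinearIsometryEquiv.norm_map,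
    norm_axialStretch_apply_sq, toDual_apply_apply]

theorem norm_comp_axialStretch_sq_le [CompleteSpace F] (T : F →L[ℝ] E) (v : F) {t : ℝ}
    (ht : 0 ≤ t) :
    ‖T ∘L axialStretch v t‖ ^ 2 ≤ ‖T‖ ^ 2 + (2 * t + t ^ 2 * ‖v‖ ^ 2) * ‖T v‖ ^ 2 := by
  have : 0 ≤ 2 * t + t ^ 2 * ‖v‖ ^ 2 := by positivity
  rw [← Real.le_sqrt (norm_nonneg _) (by positivity)]
  refine opNorm_le_of_forall_dual_comp_le fun g hg ↦ Real.le_sqrt_of_sq_le ?_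
  have hgT : ‖g ∘L T‖ ≤ ‖T‖ :=
    (g.opNorm_comp_le T).trans (mul_le_of_le_one_left (norm_nonneg _) hg)
  have hgTv : ‖g (T v)‖ ≤ ‖T v‖ := by simpa using g.le_of_opNorm_le hg (T v)
  calc ‖g ∘L T ∘L axialStretch v t‖ ^ 2
      = ‖g ∘L T‖ ^ 2 + (2 * t + t ^ 2 * ‖v‖ ^ 2) * ‖g (T v)‖ ^ 2 := by
        simpa [ContinuousLinearMap.comp_assoc] using norm_dual_comp_axialStretch_sq (g ∘L T) v t
    _ ≤ _ := by gcongr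

end AxialStretch

theorem IsJohnEquiv.norm_sq_le {E F : Type*} [NormedAddCommGroup E] [NormedSpace ℝ E]
    [NormedAddCommGroup F] [InnerProductSpace ℝ F] [FiniteDimensional ℝ F] {T : F ≃L[ℝ] E}
    (hT : IsJohnEquiv T) (v : F) : ‖v‖ ^ 2 ≤ Module.finrank ℝ F * ‖T v‖ ^ 2 := by
  refine le_mul_of_forall_sq_le_pow fun t ht ↦ ?_
  set A := axialStretch v t
  have hnorm : ‖(T : F →L[ℝ] E) ∘L A‖ ^ 2 ≤ 1 + (2 * t + t ^ 2 * ‖v‖ ^ 2) * ‖T v‖ ^ 2 :=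
    (norm_comp_axialStretch_sq_le (T : F →L[ℝ] E) v ht.le).trans <|
      add_le_add_left (pow_le_one₀ (norm_nonneg _) hT.norm_le_one) _
  calc (1 + t * ‖v‖ ^ 2) ^ 2 = |A.det| ^ 2 := by rw [sq_abs, det_axialStretch]
    _ ≤ (‖(T : F →L[ℝ] E) ∘L A‖ ^ Module.finrank ℝ F) ^ 2 := by
      gcongr
      exact hT.abs_det_le_norm_comp_pow A
    _ = (‖(T : F →L[ℝ] E) ∘L A‖ ^ 2) ^ Module.finrank ℝ F := pow_right_comm _ _ _
    _ ≤ _ := by gcongr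

theorem john_ellipsoid_norm {E : Type*} [NormedAddCommGroup E] [NormedSpace ℝ E]
    [FiniteDimensional ℝ E] :
    ∃ B : E →ₗ[ℝ] E →ₗ[ℝ] ℝ, (∀ x y : E, B x y = B y x) ∧
      ∀ x : E, ‖x‖ ^ 2 ≤ B x x ∧ B x x ≤ (Module.finrank ℝ E : ℝ) * ‖x‖ ^ 2 := by
  let F := EuclideanSpace ℝ (Fin (Module.finrank ℝ E))
  let e : F ≃L[ℝ] E := ContinuousLinearEquiv.ofFinrankEq finrank_euclideanSpace_fin
  obtain ⟨T, hT⟩ := exists_isJohnEquiv e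
  let S : E →ₗ[ℝ] F := T.symm.toLinearMap
  refine ⟨(innerₗ F).compl₁₂ S S, fun x y ↦ real_inner_comm (S y) (S x), fun x ↦ ?_⟩
  have hB : (innerₗ F).compl₁₂ S S x x = ‖S x‖ ^ 2 := real_inner_self_eq_norm_sq (S x)
  have hTS : T (S x) = x := T.apply_symm_apply x
  rw [hB]
  constructor
  · have hcontract : ‖x‖ ≤ ‖S x‖ := by
      simpa [hTS] using (T : F →L[ℝ] E).le_of_opNorm_le hT.norm_le_one (S x)
    gcongr
  · simpa [hTS, F] using hT.norm_sq_le (S x)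
end

section
/- Let (E_i, ‖·‖_i), i = 1,...,m, be κ-smooth finite-dimensional normed spaces, let 2 ≤ ρ < ∞, and equip E = E₁ × ... × E_m with the norm ‖(x¹,...,x^m)‖ = (Σ_i ‖x^i‖_i^ρ)^{1/ρ}. Then (E, ‖·‖) is (κ + ρ − 2)-smooth. -/
/-!
For a norm whose square is `C¹`, `κ`-smoothness is equivalent to the derivative-free inequality
`‖x + y‖² + ‖x - y‖² ≤ 2 (‖x‖² + κ ‖y‖²)`. In this form it passes to `ℓ^ρ` products: after the power
mean inequality, which is where `2 ≤ ρ` enters, and Minkowski's inequality in `ℓ^(ρ/2)`, it remains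
to prove, in each factor,
`(‖x + y‖^ρ + ‖x - y‖^ρ) / 2 ≤ (‖x‖² + (κ + ρ - 2) ‖y‖²)^(ρ/2)`.
With `s`, `d` the half sum and half difference of `‖x + y‖` and `‖x - y‖`, the left side is at most
`(s² + (ρ - 1) d²)^(ρ/2)` by Bonami's two-point inequality, and
`s² + (ρ - 1) d² = (s² + d²) + (ρ - 2) d²`, where `s² + d² ≤ ‖x‖² + κ ‖y‖²` by the hypothesis on the
factor and `|d| ≤ ‖y‖` by the triangle inequality.

The product norm is `C¹` away from `0`, being a power of a positive `C¹` function there. As a norm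
is `1`-Lipschitz, the derivative `2 ‖x‖ D‖·‖` of its square tends to `0` at `0`.
-/

open Filter Topology

section RealInequalities

theorem rpow_add_rpow_le_two_mul_half_add_rpow {s t θ : ℝ} (hs : 0 ≤ s) (ht : 0 ≤ t)
    (hθ₀ : 0 ≤ θ) (hθ₁ : θ ≤ 1) : s ^ θ + t ^ θ ≤ 2 * ((s + t) / 2) ^ θ := by
  have hconc := (Real.concaveOn_rpow hθ₀ hθ₁).2 hs ht
    one_half_pos.le one_half_pos.le (add_halves 1)
  simp only [smul_eq_mul, ← mul_add] at hconc
  rw [div_eq_inv_mul, ← one_div]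
  linarith

theorem mul_log_sub_log_le {a x : ℝ} (ha : 1 ≤ a) (hx : 0 ≤ x) (hax : a * x < 1) :
    a * (Real.log (1 + x) - Real.log (1 - x)) ≤
      Real.log (1 + a * x) - Real.log (1 - a * x) := by
  have hxax : x ≤ a * x := le_mul_of_one_le_left hx ha
  -- Compare the power series of `2 * artanh` at `x` and at `a * x` term by term.
  refine hasSum_le (fun k => ?_)
    ((Real.hasSum_log_sub_log_of_abs_lt_one (abs_lt.2 ⟨by linarith, by linarith⟩)).mul_left a)
    (Real.hasSum_log_sub_log_of_abs_lt_one (abs_lt.2 ⟨by linarith, hax⟩))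
  have hpow : a * x ^ (2 * k + 1) ≤ (a * x) ^ (2 * k + 1) := by
    rw [mul_pow]
    gcongr
    exact le_self_pow₀ ha (by lia)
  calc a * (2 * (1 / (2 * k + 1)) * x ^ (2 * k + 1))
      = 2 * (1 / (2 * k + 1)) * (a * x ^ (2 * k + 1)) := by ring
    _ ≤ 2 * (1 / (2 * k + 1)) * (a * x) ^ (2 * k + 1) := by gcongr

theorem one_add_rpow_mul_one_sub_mul_le {a x : ℝ} (ha : 1 ≤ a) (hx₀ : 0 ≤ x) (hx₁ : x ≤ 1) :
    (1 + x) ^ a * (1 - a * x) ≤ (1 - x) ^ a * (1 + a * x) := by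
  have hxax : x ≤ a * x := le_mul_of_one_le_left hx₀ ha
  have hadd : 0 < 1 + x := by linarith
  rcases le_or_gt 1 (a * x) with hax | hax
  · have : 0 ≤ 1 - x := by linarith
    exact (mul_nonpos_of_nonneg_of_nonpos (by positivity) (by linarith)).trans (by positivity)
  · have hsub : 0 < 1 - x := by linarith
    have hsub' : 0 < 1 - a * x := by linarith
    have hadd' : 0 < 1 + a * x := by linarith
    rw [← Real.log_le_log_iff (by positivity) (by positivity),
      Real.log_mul (by positivity) hsub'.ne', Real.log_mul (by positivity) hadd'.ne',
      Real.log_rpow hadd, Real.log_rpow hsub]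
    linarith [mul_log_sub_log_le ha hx₀ hax]

theorem hasDerivAt_two_point_quotient {ρ x : ℝ} (hρ : 0 ≤ ρ) (hx : |x| < 1) :
    HasDerivAt (fun x => ((1 + x) ^ ρ + (1 - x) ^ ρ) * (1 + (ρ - 1) * x ^ 2) ^ (-(ρ / 2)))
      (ρ * (1 + (ρ - 1) * x ^ 2) ^ (-(ρ / 2) - 1) *
        ((1 + x) ^ (ρ - 1) * (1 - (ρ - 1) * x) - (1 - x) ^ (ρ - 1) * (1 + (ρ - 1) * x))) x := by
  obtain ⟨hx₀, hx₁⟩ := abs_lt.1 hx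
  have hadd : 1 + x ≠ 0 := by linarith
  have hsub : 1 - x ≠ 0 := by linarith
  have hquad : 1 + (ρ - 1) * x ^ 2 ≠ 0 := by
    have : x ^ 2 < 1 := (sq_lt_one_iff_abs_lt_one x).2 hx
    have : 0 ≤ ρ * x ^ 2 := by positivity
    linarith
  have hd_add := ((hasDerivAt_id x).const_add 1).rpow_const (p := ρ) (.inl hadd)
  have hd_sub := ((hasDerivAt_id x).const_sub 1).rpow_const (p := ρ) (.inl hsub)
  have hd_quad := ((((hasDerivAt_id x).pow 2).const_mul (ρ - 1)).const_add 1).rpow_const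
    (p := -(ρ / 2)) (.inl hquad)
  refine ((hd_add.add hd_sub).mul hd_quad).congr_deriv ?_
  have hsplit {c : ℝ} (hc : c ≠ 0) (e : ℝ) : c ^ e = c ^ (e - 1) * c := by
    rw [Real.rpow_sub_one hc, div_mul_cancel₀ _ hc]
  simp only [id, Pi.add_apply, Pi.pow_apply]
  rw [hsplit hadd ρ, hsplit hsub ρ, hsplit hquad (-(ρ / 2))]
  push_cast
  ring

theorem one_add_rpow_add_one_sub_rpow_le {ρ x : ℝ} (hρ : 2 ≤ ρ) (hx₀ : 0 ≤ x) (hx₁ : x ≤ 1) :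
    (1 + x) ^ ρ + (1 - x) ^ ρ ≤ 2 * (1 + (ρ - 1) * x ^ 2) ^ (ρ / 2) := by
  have hquad (t : ℝ) : 0 < 1 + (ρ - 1) * t ^ 2 := by
    have : 0 ≤ (ρ - 1) * t ^ 2 := mul_nonneg (by linarith) (sq_nonneg t)
    linarith
  have hanti : AntitoneOn
      (fun t : ℝ => ((1 + t) ^ ρ + (1 - t) ^ ρ) * (1 + (ρ - 1) * t ^ 2) ^ (-(ρ / 2)))
      (Set.Icc 0 1) := by
    refine antitoneOn_of_hasDerivWithinAt_nonpos (convex_Icc 0 1) ?_ (fun t ht =>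
      (hasDerivAt_two_point_quotient (ρ := ρ) (by linarith) ?_).hasDerivWithinAt) fun t ht => ?_
    · have hρ₀ : 0 ≤ ρ := by linarith
      refine Continuous.continuousOn (Continuous.mul (.add ?_ ?_) ?_)
      · exact (continuous_const.add continuous_id).rpow_const fun _ => .inr hρ₀
      · exact (continuous_const.sub continuous_id).rpow_const fun _ => .inr hρ₀
      · exact Continuous.rpow_const (by fun_prop) fun t => .inl (hquad t).ne'
    all_goals rw [interior_Icc] at ht
    · exact abs_lt.2 ⟨by linarith [ht.1], ht.2⟩
    · exact mul_nonpos_of_nonneg_of_nonpos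
        (mul_nonneg (by linarith) (Real.rpow_nonneg (hquad t).le _))
        (sub_nonpos.2 (one_add_rpow_mul_one_sub_mul_le (by linarith) ht.1.le ht.2.le))
  have hle : ((1 + x) ^ ρ + (1 - x) ^ ρ) * (1 + (ρ - 1) * x ^ 2) ^ (-(ρ / 2)) ≤ 2 :=
    (hanti (Set.left_mem_Icc.2 zero_le_one) ⟨hx₀, hx₁⟩ hx₀).trans_eq (by norm_num)
  rwa [Real.rpow_neg (hquad x).le, ← div_eq_mul_inv,
    div_le_iff₀ (Real.rpow_pos_of_pos (hquad x) _)] at hle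

theorem rpow_eq_sq_rpow_half {a : ℝ} (ha : 0 ≤ a) (ρ : ℝ) : a ^ ρ = (a ^ 2) ^ (ρ / 2) := by
  rw [← Real.rpow_natCast_mul ha, Nat.cast_ofNat, mul_div_cancel₀ ρ two_ne_zero]

theorem half_add_rpow_le {a b ρ : ℝ} (ha : 0 ≤ a) (hb : 0 ≤ b) (hρ : 2 ≤ ρ) :
    (a ^ ρ + b ^ ρ) / 2 ≤ (((a + b) / 2) ^ 2 + (ρ - 1) * ((a - b) / 2) ^ 2) ^ (ρ / 2) := by
  wlog hab : b ≤ a generalizing a b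
  · have hswap := this hb ha (le_of_not_ge hab)
    rwa [add_comm b a, add_comm (b ^ ρ), ← neg_sub a b, neg_div, neg_sq] at hswap
  rcases ha.eq_or_lt with rfl | ha
  · obtain rfl : b = 0 := hab.antisymm hb
    simp [Real.zero_rpow (by linarith : ρ ≠ 0), Real.zero_rpow (by linarith : ρ / 2 ≠ 0)]
  set s := (a + b) / 2 with hs
  set x := (a - b) / (a + b) with hx
  have hs₀ : 0 ≤ s := by positivity
  have hx₀ : 0 ≤ x := div_nonneg (by linarith) (by positivity)
  have hx₁ : x ≤ 1 := (div_le_one (by positivity)).2 (by linarith)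
  have ha_eq : a = s * (1 + x) := by rw [hs, hx]; field_simp; ring
  have hb_eq : b = s * (1 - x) := by rw [hs, hx]; field_simp; ring
  have hd_eq : (a - b) / 2 = s * x := by rw [hs, hx]; field_simp
  have hquad : 0 ≤ (ρ - 1) * x ^ 2 := mul_nonneg (by linarith) (sq_nonneg x)
  calc (a ^ ρ + b ^ ρ) / 2 = s ^ ρ * (((1 + x) ^ ρ + (1 - x) ^ ρ) / 2) := by
        rw [ha_eq, hb_eq, Real.mul_rpow hs₀ (by linarith), Real.mul_rpow hs₀ (by linarith)]
        ring
    _ ≤ s ^ ρ * (1 + (ρ - 1) * x ^ 2) ^ (ρ / 2) := by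
        gcongr
        linarith [one_add_rpow_add_one_sub_rpow_le hρ hx₀ hx₁]
    _ = (s ^ 2 * (1 + (ρ - 1) * x ^ 2)) ^ (ρ / 2) := by
        rw [rpow_eq_sq_rpow_half hs₀, Real.mul_rpow (by positivity) (by linarith)]
    _ = (s ^ 2 + (ρ - 1) * ((a - b) / 2) ^ 2) ^ (ρ / 2) := by
        rw [hd_eq]
        ring_nf

end RealInequalities

theorem half_norm_add_rpow_add_norm_sub_rpow_le {E : Type*} [SeminormedAddCommGroup E]
    {κ ρ : ℝ} (hρ : 2 ≤ ρ) {x y : E}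
    (h : ‖x + y‖ ^ 2 + ‖x - y‖ ^ 2 ≤ 2 * (‖x‖ ^ 2 + κ * ‖y‖ ^ 2)) :
    (‖x + y‖ ^ ρ + ‖x - y‖ ^ ρ) / 2 ≤ (‖x‖ ^ 2 + (κ + ρ - 2) * ‖y‖ ^ 2) ^ (ρ / 2) := by
  set s := (‖x + y‖ + ‖x - y‖) / 2 with hs
  set d := (‖x + y‖ - ‖x - y‖) / 2 with hd
  have hsd : s ^ 2 + d ^ 2 ≤ ‖x‖ ^ 2 + κ * ‖y‖ ^ 2 := by
    rw [hs, hd]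
    linarith
  have hdy : d ^ 2 ≤ ‖y‖ ^ 2 := by
    refine sq_le_sq.2 ?_
    have htri := abs_norm_sub_norm_le (x + y) (x - y)
    rw [add_sub_sub_cancel] at htri
    rw [hd, abs_div, abs_two, abs_norm]
    linarith [norm_add_le y y]
  calc (‖x + y‖ ^ ρ + ‖x - y‖ ^ ρ) / 2 ≤ (s ^ 2 + (ρ - 1) * d ^ 2) ^ (ρ / 2) :=
        half_add_rpow_le (norm_nonneg _) (norm_nonneg _) hρ
    _ ≤ (‖x‖ ^ 2 + (κ + ρ - 2) * ‖y‖ ^ 2) ^ (ρ / 2) := by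
        refine Real.rpow_le_rpow ?_ ?_ (by linarith)
        · exact add_nonneg (sq_nonneg s) (mul_nonneg (by linarith) (sq_nonneg d))
        · linarith [mul_le_mul_of_nonneg_left hdy (sub_nonneg.2 hρ)]

section Smooth

variable {E F : Type*} [NormedAddCommGroup E] [NormedSpace ℝ E]
  [NormedAddCommGroup F] [NormedSpace ℝ F]

/-- A `κ`-smooth normed space, with `p x = ‖x‖ ^ 2`. The two fields make sense in any real normed
space, so no finite-dimensionality is imposed. -/
structure IsSmoothSpace (κ : ℝ) (E : Type*) [NormedAddCommGroup E] [NormedSpace ℝ E] : Prop where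
  contDiff_norm_sq : ContDiff ℝ 1 fun x : E => ‖x‖ ^ 2
  norm_add_sq_le (x y : E) :
    ‖x + y‖ ^ 2 ≤ ‖x‖ ^ 2 + fderiv ℝ (fun z : E => ‖z‖ ^ 2) x y + κ * ‖y‖ ^ 2

theorem norm_add_sq_add_norm_sub_sq_le {κ : ℝ} {x : E} {L : E →L[ℝ] ℝ}
    (h : ∀ y, ‖x + y‖ ^ 2 ≤ ‖x‖ ^ 2 + L y + κ * ‖y‖ ^ 2) (y : E) :
    ‖x + y‖ ^ 2 + ‖x - y‖ ^ 2 ≤ 2 * (‖x‖ ^ 2 + κ * ‖y‖ ^ 2) := by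
  have hneg := h (-y)
  rw [← sub_eq_add_neg, map_neg, norm_neg] at hneg
  linarith [h y]

theorem norm_add_sq_le_of_hasFDerivAt {κ : ℝ} {x : E} {L : E →L[ℝ] ℝ}
    (hL : HasFDerivAt (fun z : E => ‖z‖ ^ 2) L x)
    (h : ∀ x y : E, ‖x + y‖ ^ 2 + ‖x - y‖ ^ 2 ≤ 2 * (‖x‖ ^ 2 + κ * ‖y‖ ^ 2)) (y : E) :
    ‖x + y‖ ^ 2 ≤ ‖x‖ ^ 2 + L y + κ * ‖y‖ ^ 2 := by
  -- `g u` tends to `L y` as `u → ∞`, and the midpoint inequality makes it increase under doubling.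
  let g : ℝ → ℝ := fun u => u * (‖x + u⁻¹ • y‖ ^ 2 - ‖x‖ ^ 2) - u⁻¹ * (κ * ‖y‖ ^ 2)
  have hdouble {u : ℝ} (hu : 0 < u) : g u ≤ g (2 * u) := by
    set z := (2 * u)⁻¹ • y with hz
    have hzz : z + z = u⁻¹ • y := by
      rw [hz, ← two_smul ℝ, smul_smul, mul_inv, mul_inv_cancel_left₀ two_ne_zero]
    have hnorm : ‖z‖ = (2 * u)⁻¹ * ‖y‖ := by
      rw [hz, norm_smul, Real.norm_of_nonneg (by positivity)]
    have hmid := h (x + z) z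
    rw [add_sub_cancel_right, add_assoc, hzz, hnorm] at hmid
    calc u * (‖x + u⁻¹ • y‖ ^ 2 - ‖x‖ ^ 2) - u⁻¹ * (κ * ‖y‖ ^ 2)
        = u * (‖x + u⁻¹ • y‖ ^ 2 + ‖x‖ ^ 2) - 2 * u * ‖x‖ ^ 2 - u⁻¹ * (κ * ‖y‖ ^ 2) := by ring
      _ ≤ u * (2 * (‖x + z‖ ^ 2 + κ * ((2 * u)⁻¹ * ‖y‖) ^ 2)) - 2 * u * ‖x‖ ^ 2 -
            u⁻¹ * (κ * ‖y‖ ^ 2) := by gcongr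
      _ = 2 * u * (‖x + z‖ ^ 2 - ‖x‖ ^ 2) - (2 * u)⁻¹ * (κ * ‖y‖ ^ 2) := by
        field_simp
        ring
  have hmono : Monotone fun n : ℕ => g (2 ^ n) := monotone_nat_of_le_succ fun n => by
    simpa only [pow_succ'] using hdouble (pow_pos two_pos n)
  have hlim : Tendsto (fun n : ℕ => g (2 ^ n)) atTop (𝓝 (L y)) := by
    have hpow : Tendsto (fun n : ℕ => (2 : ℝ) ^ n) atTop atTop :=
      tendsto_pow_atTop_atTop_of_one_lt one_lt_two
    have hquot := hL.lim y (tendsto_norm_atTop_atTop.comp hpow)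
    simpa [g] using hquot.sub (hpow.inv_tendsto_atTop.mul_const (κ * ‖y‖ ^ 2))
  have hzero := hmono.ge_of_tendsto hlim 0
  simp only [g, pow_zero, inv_one, one_smul, one_mul] at hzero
  linarith

theorem isSmoothSpace_iff {κ : ℝ} :
    IsSmoothSpace κ E ↔ ContDiff ℝ 1 (fun x : E => ‖x‖ ^ 2) ∧
      ∀ x y : E, ‖x + y‖ ^ 2 + ‖x - y‖ ^ 2 ≤ 2 * (‖x‖ ^ 2 + κ * ‖y‖ ^ 2) where
  mp h := ⟨h.contDiff_norm_sq, fun x => norm_add_sq_add_norm_sub_sq_le (h.norm_add_sq_le x)⟩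
  mpr h := ⟨h.1, fun x =>
    norm_add_sq_le_of_hasFDerivAt (h.1.differentiable one_ne_zero x).hasFDerivAt h.2⟩

theorem IsSmoothSpace.comp_continuousLinearMap {κ : ℝ} (h : IsSmoothSpace κ E) (e : F →L[ℝ] E) :
    ContDiff ℝ 1 (fun x => ‖e x‖ ^ 2) ∧ ∀ x y,
      ‖e (x + y)‖ ^ 2 ≤ ‖e x‖ ^ 2 + fderiv ℝ (fun z => ‖e z‖ ^ 2) x y + κ * ‖e y‖ ^ 2 := by
  refine ⟨h.contDiff_norm_sq.comp e.contDiff, fun x y => ?_⟩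
  have hderiv := ((h.contDiff_norm_sq.differentiable one_ne_zero (e x)).hasFDerivAt.comp x
    e.hasFDerivAt).fderiv
  rw [Function.comp_def] at hderiv
  simpa [hderiv] using h.norm_add_sq_le (e x) (e y)

theorem contDiff_one_norm_sq (h : ∀ x : E, x ≠ 0 → ContDiffAt ℝ 1 norm x) :
    ContDiff ℝ 1 fun x : E => ‖x‖ ^ 2 := by
  refine contDiff_one_iff_hasFDerivAt.2
    ⟨fun x => (2 * ‖x‖) • fderiv ℝ norm x, continuous_iff_continuousAt.2 fun x => ?_, fun x => ?_⟩
  · rcases eq_or_ne x 0 with rfl | hx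
    · have hlim : Tendsto (fun z : E => 2 * ‖z‖) (𝓝 0) (𝓝 0) := by
        simpa using tendsto_norm_zero.const_mul (2 : ℝ)
      rw [ContinuousAt, norm_zero, mul_zero, zero_smul]
      refine squeeze_zero_norm (fun z => ?_) hlim
      rw [norm_smul, Real.norm_of_nonneg (by positivity)]
      exact mul_le_of_le_one_right (by positivity)
        (by simpa using norm_fderiv_le_of_lipschitz ℝ (lipschitzWith_one_norm (E := E)))
    · exact (continuousAt_const.mul continuous_norm.continuousAt).smul
        ((h x hx).continuousAt_fderiv one_ne_zero)
  · rcases eq_or_ne x 0 with rfl | hx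
    · simp only [norm_zero, mul_zero, zero_smul]
      exact Asymptotics.IsBigO.hasFDerivAt (n := 2)
        (.of_bound 1 (.of_forall fun z => by simp)) one_lt_two
    · simpa using ((h x hx).differentiableAt one_ne_zero).hasFDerivAt.pow 2

theorem contDiff_norm_rpow_of_norm_sq {ρ : ℝ} (hρ : 2 ≤ ρ)
    (h : ContDiff ℝ 1 fun x : E => ‖x‖ ^ 2) : ContDiff ℝ 1 fun x : E => ‖x‖ ^ ρ := by
  simp only [rpow_eq_sq_rpow_half (norm_nonneg _)]
  exact h.rpow_const_of_le (m := 1) (by push_cast; linarith)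

end Smooth

section Product

open scoped ENNReal

variable {ι : Type*} [Fintype ι] {E : ι → Type*} [∀ i, NormedAddCommGroup (E i)]
  {q : ℝ≥0∞}

theorem norm_sq_piLp_eq_sum (hq : 0 < q.toReal) (x : PiLp q E) :
    ‖x‖ ^ 2 = (∑ i, ‖x i‖ ^ q.toReal) ^ (1 / (q.toReal / 2)) := by
  rw [PiLp.norm_eq_sum hq, ← Real.rpow_mul_natCast (by positivity)]
  congr 1
  push_cast
  field_simp

theorem rpow_sum_norm_sq_add_mul_norm_sq_le {K : ℝ} (hK : 0 ≤ K) (hq : 2 ≤ q.toReal)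
    (x y : PiLp q E) :
    (∑ i, (‖x i‖ ^ 2 + K * ‖y i‖ ^ 2) ^ (q.toReal / 2)) ^ (1 / (q.toReal / 2)) ≤
      ‖x‖ ^ 2 + K * ‖y‖ ^ 2 := by
  have hr : 1 ≤ q.toReal / 2 := by linarith
  have hsmul : (∑ i, (K * ‖y i‖ ^ 2) ^ (q.toReal / 2)) ^ (1 / (q.toReal / 2)) =
      K * (∑ i, (‖y i‖ ^ 2) ^ (q.toReal / 2)) ^ (1 / (q.toReal / 2)) := by
    simp_rw [Real.mul_rpow hK (sq_nonneg _), ← Finset.mul_sum]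
    rw [Real.mul_rpow (by positivity) (by positivity), one_div,
      Real.rpow_rpow_inv hK (by linarith)]
  rw [norm_sq_piLp_eq_sum (by linarith), norm_sq_piLp_eq_sum (by linarith)]
  simp only [rpow_eq_sq_rpow_half (norm_nonneg _)]
  rw [← hsmul]
  exact Real.Lp_add_le_of_nonneg _ hr (fun _ _ => sq_nonneg _) fun _ _ => by positivity

theorem norm_add_sq_add_norm_sub_sq_piLp_le {κ : ℝ} (hκ : 0 ≤ κ) (hq : 2 ≤ q.toReal)
    (h : ∀ i (x y : E i), ‖x + y‖ ^ 2 + ‖x - y‖ ^ 2 ≤ 2 * (‖x‖ ^ 2 + κ * ‖y‖ ^ 2))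
    (x y : PiLp q E) :
    ‖x + y‖ ^ 2 + ‖x - y‖ ^ 2 ≤ 2 * (‖x‖ ^ 2 + (κ + q.toReal - 2) * ‖y‖ ^ 2) := by
  set r := q.toReal / 2 with hr
  have hr₁ : 1 ≤ r := by linarith
  set K := κ + q.toReal - 2
  calc ‖x + y‖ ^ 2 + ‖x - y‖ ^ 2
      = (∑ i, ‖x i + y i‖ ^ q.toReal) ^ (1 / r) + (∑ i, ‖x i - y i‖ ^ q.toReal) ^ (1 / r) := by
        simp only [norm_sq_piLp_eq_sum (by linarith), PiLp.add_apply, PiLp.sub_apply, hr]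
    _ ≤ 2 * ((∑ i, ‖x i + y i‖ ^ q.toReal + ∑ i, ‖x i - y i‖ ^ q.toReal) / 2) ^ (1 / r) :=
        rpow_add_rpow_le_two_mul_half_add_rpow (by positivity) (by positivity) (by positivity)
          ((div_le_one (by linarith)).2 hr₁)
    _ = 2 * (∑ i, (‖x i + y i‖ ^ q.toReal + ‖x i - y i‖ ^ q.toReal) / 2) ^ (1 / r) := by
        rw [← Finset.sum_add_distrib, Finset.sum_div]
    _ ≤ 2 * (∑ i, (‖x i‖ ^ 2 + K * ‖y i‖ ^ 2) ^ r) ^ (1 / r) := by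
        gcongr with i
        exact half_norm_add_rpow_add_norm_sub_rpow_le hq (h i (x i) (y i))
    _ ≤ 2 * (‖x‖ ^ 2 + K * ‖y‖ ^ 2) := by
        gcongr
        exact rpow_sum_norm_sq_add_mul_norm_sq_le (by linarith) hq x y

variable [∀ i, NormedSpace ℝ (E i)] [Fact (1 ≤ q)]

theorem contDiffAt_norm_piLp (hq : 2 ≤ q.toReal)
    (h : ∀ i, ContDiff ℝ 1 fun x : E i => ‖x‖ ^ 2) {x : PiLp q E} (hx : x ≠ 0) :
    ContDiffAt ℝ 1 norm x := by
  have hq₀ : 0 < q.toReal := by linarith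
  have hsum : ContDiff ℝ 1 fun z : PiLp q E => ∑ i, ‖z i‖ ^ q.toReal :=
    ContDiff.sum fun i _ => (contDiff_norm_rpow_of_norm_sq hq (h i)).comp
      (PiLp.proj q E i : PiLp q E →L[ℝ] E i).contDiff
  have hnorm : (norm : PiLp q E → ℝ) = fun z => (∑ i, ‖z i‖ ^ q.toReal) ^ (1 / q.toReal) :=
    funext (PiLp.norm_eq_sum hq₀)
  have hne : ∑ i, ‖x i‖ ^ q.toReal ≠ 0 := fun h₀ => hx <| norm_eq_zero.1 <| by
    rw [PiLp.norm_eq_sum hq₀, h₀, Real.zero_rpow (by positivity)]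
  rw [hnorm]
  exact hsum.contDiffAt.rpow_const_of_ne hne

-- `(∞ : ℝ≥0∞).toReal = 0`, so `hq` also forces `q` to be finite.
theorem IsSmoothSpace.piLp {κ : ℝ} (hκ : 0 ≤ κ) (hq : 2 ≤ q.toReal)
    (h : ∀ i, IsSmoothSpace κ (E i)) : IsSmoothSpace (κ + q.toReal - 2) (PiLp q E) := by
  simp only [isSmoothSpace_iff] at h ⊢
  exact ⟨contDiff_one_norm_sq fun _ => contDiffAt_norm_piLp hq fun i => (h i).1,
    norm_add_sq_add_norm_sub_sq_piLp_le hκ hq fun i => (h i).2⟩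

end Product

theorem product_rho_norm_smooth {m : ℕ} (E : Fin m → Type*)
    [∀ i, NormedAddCommGroup (E i)] [∀ i, NormedSpace ℝ (E i)]
    (κ ρ : ℝ) (hκ : 1 ≤ κ) (hρ : 2 ≤ ρ)
    (hsm : ∀ i, ContDiff ℝ 1 (fun x : E i => ‖x‖ ^ 2) ∧
      ∀ x y : E i, ‖x + y‖ ^ 2 ≤
        ‖x‖ ^ 2 + fderiv ℝ (fun z : E i => ‖z‖ ^ 2) x y + κ * ‖y‖ ^ 2)
    (p : (∀ i, E i) → ℝ)
    (hp : p = fun x => ((∑ i, ‖x i‖ ^ ρ) ^ (1 / ρ)) ^ 2) :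
    ContDiff ℝ 1 p ∧
      ∀ x y : ∀ i, E i, p (x + y) ≤ p x + fderiv ℝ p x y + (κ + ρ - 2) * p y := by
  have hq : (ENNReal.ofReal ρ).toReal = ρ := ENNReal.toReal_ofReal (by linarith)
  have : Fact (1 ≤ ENNReal.ofReal ρ) := ⟨ENNReal.one_le_ofReal.2 (by linarith)⟩
  let e := (PiLp.continuousLinearEquiv (ENNReal.ofReal ρ) ℝ E).symm.toContinuousLinearMap
  have hpe : p = fun x => ‖e x‖ ^ 2 := by
    ext x
    rw [hp, PiLp.norm_eq_sum (by linarith), hq]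
    rfl
  have hsmooth : IsSmoothSpace (κ + ρ - 2) (PiLp (ENNReal.ofReal ρ) E) := by
    simpa only [hq] using IsSmoothSpace.piLp (q := ENNReal.ofReal ρ)
      (by linarith) (hρ.trans_eq hq.symm) fun i => ⟨(hsm i).1, (hsm i).2⟩
  rw [hpe]
  exact hsmooth.comp_continuousLinearMap e
end
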